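/- Let 0<s<1 and 2s<r<1+2s, and let v:ℝ→ℝ be a bounded measurable odd function with v(x) = x^r for 0≤x≤1 (hence v(x) = -|x|^r for -1≤x<0). Define H(x) := ∫_{ℝ∖(-1/2,1/2)} (v(x+y) - v(x)) |y|^{-1-2s} dy, and suppose that the map t ↦ H(t^{1/r}) is Lipschitz continuous on [0, 2^{-r}]. Then, with β := (r-2s)/r, there exists f ∈ C^β([-2^{-r}, 2^{-r}]) such that (-Δ)^s v(x) = f(v(x)) for all x ∈ [-1/2, 1/2]. -/

import Mathlib

open MeasureTheory Filter Set

/-- The normalizing constant `c_s` of the fractional Laplacian. -/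
noncomputable def fracLapCoef (s : ℝ) : ℝ :=
  s * (4 : ℝ) ^ s * Real.Gamma (1 / 2 + s) / (Real.sqrt Real.pi * Real.Gamma (1 - s))

/-- `HasFracLapAt s u x L` means the principal value defining `(-Δ)^s u (x)`
exists and equals `L`. -/
def HasFracLapAt (s : ℝ) (u : ℝ → ℝ) (x L : ℝ) : Prop :=
  (∀ ε : ℝ, 0 < ε →
    MeasureTheory.IntegrableOn (fun y : ℝ => (u x - u y) / |x - y| ^ (1 + 2 * s))
      {y : ℝ | ε < |y - x|}) ∧
  Filter.Tendsto (fun ε : ℝ =>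
      fracLapCoef s * ∫ y in {y : ℝ | ε < |y - x|}, (u x - u y) / |x - y| ^ (1 + 2 * s))
    (nhdsWithin 0 (Set.Ioi 0)) (nhds L)

/-- `MemCalpha α Ω f` : `f ∈ C^α(Ω)`, i.e. `f` is continuously differentiable with bounded
derivatives up to order `⌊α⌋` on `Ω`, and its `⌊α⌋`-th derivative is Hölder continuous of
exponent `α - ⌊α⌋` on `Ω`. -/
def MemCalpha (α : ℝ) (Ω : Set ℝ) (f : ℝ → ℝ) : Prop :=
  ContDiffOn ℝ (⌊α⌋₊ : ℕ) f Ω ∧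
  (∀ k : ℕ, k ≤ ⌊α⌋₊ → ∃ C : ℝ, ∀ x ∈ Ω, |iteratedDerivWithin k f Ω x| ≤ C) ∧
  ∃ C : NNReal, HolderOnWith C (α - (⌊α⌋₊ : ℝ)).toNNReal (iteratedDerivWithin ⌊α⌋₊ f Ω) Ω

/-!
Pair `x + y` with `x - y` in the principal value and split the integral at `|y| = 1 / 2`. For
`|x| ≤ 1 / 2` the near part only sees `v` where it is the signed power `|x| ^ r * sign x`. For
`0 ≤ x` the second difference integral of that power over all of `(0, ∞)` is a multiple of
`x ^ (r - 2 * s)` by homogeneity, while its tail over `(1 / 2, ∞)` is a multiple of `x ^ r` up to a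
Lipschitz function of `x`. Substituting `x = t ^ (1 / r)` turns these three terms into a multiple of
`t ^ β`, a multiple of `t`, and a function with the regularity of `t ^ (1 / r)`, all `β`-Hölder
since `β = (r - 2 * s) / r ≤ min 1 (1 / r)`. The far part is controlled by the hypothesis on `H`,
and negative `t` are reached by oddness.
-/

section Holder

variable {X Y : Type*} [PseudoMetricSpace X]

/-- `f` is Hölder continuous on `S` with exponent `β`, for some unspecified constant. -/
def HolderContinuousOn [PseudoMetricSpace Y] (β : NNReal) (f : X → Y) (S : Set X) : Prop :=
  ∃ C : NNReal, HolderOnWith C β f S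

namespace HolderContinuousOn

section Metric

variable [PseudoMetricSpace Y] {β γ : NNReal} {f g : X → Y} {S : Set X}

lemma congr (hf : HolderContinuousOn β f S) (h : EqOn f g S) : HolderContinuousOn β g S := by
  obtain ⟨C, hC⟩ := hf
  refine ⟨C, fun x hx y hy => ?_⟩
  rw [← h hx, ← h hy]
  exact hC x hx y hy

lemma of_le (hf : HolderContinuousOn β f S) (hS : Bornology.IsBounded S) (h : γ ≤ β) :
    HolderContinuousOn γ f S := by
  obtain ⟨C, hC⟩ := hf
  obtain ⟨D, hD⟩ := Metric.isBounded_iff_nndist.1 hS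
  exact ⟨_, hC.of_le (fun x hx y hy => edist_le_coe.2 (hD hx hy)) h⟩

lemma of_lipschitzOnWith {K : NNReal} (hf : LipschitzOnWith K f S) (hS : Bornology.IsBounded S)
    (hβ : β ≤ 1) : HolderContinuousOn β f S :=
  of_le ⟨K, holderOnWith_one.2 hf⟩ hS hβ

lemma lipschitzOnWith_comp {Z : Type*} [PseudoMetricSpace Z] {φ : Y → Z} {T : Set Y} {K : NNReal}
    (hφ : LipschitzOnWith K φ T) (hf : HolderContinuousOn β f S) (hST : MapsTo f S T) :
    HolderContinuousOn β (φ ∘ f) S := by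
  obtain ⟨C, hC⟩ := hf
  have hcomp := (holderOnWith_one.2 hφ).comp hC hST
  rw [one_mul] at hcomp
  exact ⟨_, hcomp⟩

lemma exists_bound {f : X → ℝ} (hf : HolderContinuousOn β f S) (hβ : 0 < β) (hS : IsCompact S) :
    ∃ M : ℝ, ∀ x ∈ S, |f x| ≤ M :=
  hS.exists_bound_of_continuousOn (hf.choose_spec.continuousOn hβ)

lemma Icc_union_Icc {f : ℝ → Y} {a b c : ℝ} (hab : HolderContinuousOn β f (Icc a b))
    (hbc : HolderContinuousOn β f (Icc b c)) (hb : b ∈ Icc a c) :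
    HolderContinuousOn β f (Icc a c) := by
  obtain ⟨C₁, h₁⟩ := hab
  obtain ⟨C₂, h₂⟩ := hbc
  have across : ∀ t ∈ Icc a b, ∀ u ∈ Icc b c,
      edist (f t) (f u) ≤ ↑(C₁ + C₂) * edist t u ^ (β : ℝ) := by
    intro t ht u hu
    have hbtu : b ∈ uIcc t u := Icc_subset_uIcc ⟨ht.2, hu.1⟩
    have htb : edist t b ≤ edist t u := by
      simpa only [edist_dist] using ENNReal.ofReal_le_ofReal (Real.dist_left_le_of_mem_uIcc hbtu)
    have hbu : edist b u ≤ edist t u := by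
      simpa only [edist_dist] using ENNReal.ofReal_le_ofReal (Real.dist_right_le_of_mem_uIcc hbtu)
    calc edist (f t) (f u) ≤ edist (f t) (f b) + edist (f b) (f u) := edist_triangle _ _ _
      _ ≤ C₁ * edist t b ^ (β : ℝ) + C₂ * edist b u ^ (β : ℝ) :=
        add_le_add (h₁ t ht b ⟨hb.1, le_rfl⟩) (h₂ b ⟨le_rfl, hb.2⟩ u hu)
      _ ≤ C₁ * edist t u ^ (β : ℝ) + C₂ * edist t u ^ (β : ℝ) := by gcongr
      _ = ↑(C₁ + C₂) * edist t u ^ (β : ℝ) := by rw [ENNReal.coe_add, add_mul]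
  refine ⟨C₁ + C₂, fun t ht u hu => ?_⟩
  rcases le_total t b with htb | hbt <;> rcases le_total u b with hub | hbu
  · exact h₁.mono_const le_self_add t ⟨ht.1, htb⟩ u ⟨hu.1, hub⟩
  · exact across t ⟨ht.1, htb⟩ u ⟨hbu, hu.2⟩
  · rw [edist_comm, edist_comm t u]
    exact across u ⟨hu.1, hub⟩ t ⟨hbt, ht.2⟩
  · exact h₂.mono_const le_add_self t ⟨hbt, ht.2⟩ u ⟨hbu, hu.2⟩

end Metric

section Normed

variable [SeminormedAddCommGroup Y] {β : NNReal} {f g : X → Y} {S : Set X}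

lemma const_smul (a : ℝ) [NormedSpace ℝ Y] (hf : HolderContinuousOn β f S) :
    HolderContinuousOn β (a • f) S := by
  obtain ⟨C, hC⟩ := hf
  exact ⟨_, HolderWith.restrict_iff.1 ((HolderWith.restrict_iff.2 hC).smul a)⟩

lemma add (hf : HolderContinuousOn β f S) (hg : HolderContinuousOn β g S) :
    HolderContinuousOn β (f + g) S := by
  obtain ⟨C, hC⟩ := hf
  obtain ⟨C', hC'⟩ := hg
  exact ⟨_, HolderWith.restrict_iff.1
    ((HolderWith.restrict_iff.2 hC).add (HolderWith.restrict_iff.2 hC'))⟩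

lemma neg (hf : HolderContinuousOn β f S) : HolderContinuousOn β (-f) S := by
  obtain ⟨C, hC⟩ := hf
  refine ⟨C, fun x hx y hy => ?_⟩
  rw [Pi.neg_apply, Pi.neg_apply, edist_neg_neg]
  exact hC x hx y hy

lemma sub (hf : HolderContinuousOn β f S) (hg : HolderContinuousOn β g S) :
    HolderContinuousOn β (f - g) S :=
  sub_eq_add_neg f g ▸ hf.add hg.neg

lemma Icc_neg_of_odd {f : ℝ → Y} {a : ℝ} (ha : 0 ≤ a) (hodd : f.Odd)
    (hf : HolderContinuousOn β f (Icc 0 a)) : HolderContinuousOn β f (Icc (-a) a) := by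
  have hneg : HolderContinuousOn β f (Icc (-a) 0) := by
    obtain ⟨C, hC⟩ := hf
    refine ⟨C, fun t ht u hu => ?_⟩
    have h := hC (-t) ⟨neg_nonneg.2 ht.2, neg_le.1 ht.1⟩ (-u) ⟨neg_nonneg.2 hu.2, neg_le.1 hu.1⟩
    rwa [hodd, hodd, edist_neg_neg, edist_neg_neg] at h
  exact hneg.Icc_union_Icc hf ⟨neg_nonpos.2 ha, ha⟩

end Normed

lemma memCalpha {β : NNReal} {f : ℝ → ℝ} {Ω : Set ℝ} (hf : HolderContinuousOn β f Ω)
    (hβ₀ : 0 < β) (hβ₁ : β < 1) (hΩ : IsCompact Ω) : MemCalpha β Ω f := by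
  have hfloor : ⌊(β : ℝ)⌋₊ = 0 := Nat.floor_eq_zero.2 hβ₁
  refine ⟨?_, fun k hk => ?_, ?_⟩
  · rw [hfloor]
    exact contDiffOn_zero.2 (hf.choose_spec.continuousOn hβ₀)
  · obtain rfl : k = 0 := Nat.le_zero.1 (hfloor ▸ hk)
    simpa only [iteratedDerivWithin_zero] using hf.exists_bound hβ₀ hΩ
  · simpa only [hfloor, iteratedDerivWithin_zero, Nat.cast_zero, sub_zero,
      Real.toNNReal_coe] using! hf

end HolderContinuousOn

end Holder

section RealPower

lemma abs_rpow_sub_rpow_le {p m M a b : ℝ} (hm : 0 < m) (ha : a ∈ Icc m M) (hb : b ∈ Icc m M) :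
    |a ^ p - b ^ p| ≤ |p| * (m ^ (p - 1) + M ^ (p - 1)) * |a - b| := by
  refine Convex.norm_image_sub_le_of_norm_hasDerivWithin_le (f := fun x : ℝ => x ^ p)
    (f' := fun x => p * x ^ (p - 1)) (fun x hx => (Real.hasDerivAt_rpow_const
      (Or.inl (hm.trans_le hx.1).ne')).hasDerivWithinAt) (fun x hx => ?_) (convex_Icc m M) hb ha
  have hx₀ : 0 < x := hm.trans_le hx.1
  rw [Real.norm_eq_abs, abs_mul, abs_of_pos (Real.rpow_pos_of_pos hx₀ _)]
  gcongr
  rcases le_total 1 p with hp | hp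
  · exact (Real.rpow_le_rpow hx₀.le hx.2 (sub_nonneg.2 hp)).trans
      (le_add_of_nonneg_left (Real.rpow_nonneg hm.le _))
  · exact (Real.rpow_le_rpow_of_nonpos hm hx.1 (sub_nonpos.2 hp)).trans
      (le_add_of_nonneg_right (Real.rpow_nonneg (hx₀.le.trans hx.2) _))

lemma holderOnWith_rpow {p : NNReal} (hp : p ≤ 1) :
    HolderOnWith 1 p (fun t : ℝ => t ^ (p : ℝ)) (Ici 0) := by
  have key : ∀ u ∈ Ici (0 : ℝ), ∀ t, u ≤ t →
      edist (t ^ (p : ℝ)) (u ^ (p : ℝ)) ≤ edist t u ^ (p : ℝ) := by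
    intro u hu t hut
    have hmono : u ^ (p : ℝ) ≤ t ^ (p : ℝ) := Real.rpow_le_rpow hu hut p.2
    have hsub : t ^ (p : ℝ) ≤ u ^ (p : ℝ) + (t - u) ^ (p : ℝ) := by
      simpa using Real.rpow_add_le_add_rpow hu (sub_nonneg.2 hut) p.2 hp
    rw [edist_dist, edist_dist, Real.dist_eq, Real.dist_eq, abs_of_nonneg (sub_nonneg.2 hmono),
      abs_of_nonneg (sub_nonneg.2 hut),
      ENNReal.ofReal_rpow_of_nonneg (sub_nonneg.2 hut) p.coe_nonneg]
    exact ENNReal.ofReal_le_ofReal (sub_le_iff_le_add'.2 hsub)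
  intro t ht u hu
  rw [ENNReal.coe_one, one_mul]
  rcases le_total u t with h | h
  · exact key u hu t h
  · rw [edist_comm, edist_comm t u]
    exact key t ht u h

lemma holderContinuousOn_rpow {p b : ℝ} {β : NNReal} (hβ : β ≤ 1) (hp : β ≤ p) :
    HolderContinuousOn β (fun t : ℝ => t ^ p) (Icc 0 b) := by
  have hbdd : Bornology.IsBounded (Icc 0 b) := Metric.isBounded_Icc 0 b
  rcases le_total p 1 with hp₁ | hp₁
  · lift p to NNReal using β.2.trans hp
    have hHolder : HolderContinuousOn p (fun t : ℝ => t ^ (p : ℝ)) (Icc 0 b) :=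
      ⟨1, (holderOnWith_rpow hp₁).mono Icc_subset_Ici_self⟩
    exact hHolder.of_le hbdd hp
  · have hC1 : ContDiff ℝ 1 (fun t : ℝ => t ^ p) :=
      Real.contDiff_rpow_const_of_le (n := 1) (by simpa using hp₁)
    obtain ⟨K, hK⟩ := hC1.locallyLipschitz.locallyLipschitzOn.exists_lipschitzOnWith_of_compact
      (isCompact_Icc (a := (0 : ℝ)) (b := b))
    exact .of_lipschitzOnWith hK hbdd hβ

lemma rpow_le_const_mul_rpow {q y z : ℝ} (hy : 0 < y) (hyz : y / 2 ≤ z) (hzy : z ≤ 2 * y) :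
    z ^ q ≤ ((1 / 2) ^ q + 2 ^ q) * y ^ q := by
  have hz : 0 < z := (half_pos hy).trans_le hyz
  rw [add_mul, ← Real.mul_rpow one_half_pos.le hy.le, ← Real.mul_rpow zero_le_two hy.le,
    one_div_mul_eq_div]
  rcases le_total 0 q with hq | hq
  · exact (Real.rpow_le_rpow hz.le hzy hq).trans (le_add_of_nonneg_left (by positivity))
  · exact (Real.rpow_le_rpow_of_nonpos (half_pos hy) hyz hq).trans
      (le_add_of_nonneg_right (by positivity))

lemma integrableOn_one_div_rpow_Ioi {q ρ : ℝ} (hq : 1 < q) (hρ : 0 < ρ) :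
    IntegrableOn (fun y : ℝ => 1 / y ^ q) (Ioi ρ) := by
  refine (integrableOn_Ioi_rpow_of_lt (neg_lt_neg hq) hρ).congr_fun (fun y hy => ?_)
    measurableSet_Ioi
  simp only [Real.rpow_neg (hρ.trans hy).le, one_div]

lemma integrableOn_add_rpow_div_rpow_Ioi {p q c ρ : ℝ} (hp : -1 < p) (hpq : p + 1 < q)
    (hρ : 0 < ρ) (hc : |c| ≤ ρ) : IntegrableOn (fun y : ℝ => (y + c) ^ p / y ^ q) (Ioi ρ) := by
  obtain ⟨hcρ, hcρ'⟩ := abs_le.1 hc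
  rw [← Ioc_union_Ioi_eq_Ioi (by linarith : ρ ≤ 2 * ρ)]
  refine IntegrableOn.union ?_ ?_
  · have hsing : IntegrableOn (fun y : ℝ => (y + c) ^ p) (Icc ρ (2 * ρ)) := by
      have h := (intervalIntegral.intervalIntegrable_rpow' (a := ρ + c) (b := 2 * ρ + c)
        hp).comp_add_right c
      rw [add_sub_cancel_right, add_sub_cancel_right] at h
      exact (intervalIntegrable_iff_integrableOn_Icc_of_le (by linarith)).1 h
    have hcont : ContinuousOn (fun y : ℝ => (y ^ q)⁻¹) (Icc ρ (2 * ρ)) :=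
      (continuousOn_id.rpow_const fun y hy => Or.inl (hρ.trans_le hy.1).ne').inv₀
        fun y hy => (Real.rpow_pos_of_pos (hρ.trans_le hy.1) q).ne'
    simpa only [div_eq_mul_inv] using
      (hsing.mul_continuousOn hcont isCompact_Icc).mono_set Ioc_subset_Icc_self
  · have hdom := (integrableOn_Ioi_rpow_of_lt (a := p - q) (c := 2 * ρ) (by linarith)
      (by linarith)).const_mul ((1 / 2) ^ p + 2 ^ p)
    refine Integrable.mono' hdom
      (by fun_prop : Measurable fun y : ℝ => (y + c) ^ p / y ^ q).aestronglyMeasurable ?_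
    filter_upwards [ae_restrict_mem measurableSet_Ioi] with y (hy : 2 * ρ < y)
    have hy₀ : 0 < y := by linarith
    have hyc : 0 < y + c := by linarith
    rw [Real.norm_eq_abs, abs_of_pos (by positivity), Real.rpow_sub hy₀, ← mul_div_assoc]
    gcongr
    exact rpow_le_const_mul_rpow hy₀ (by linarith) (by linarith)

end RealPower

section SignedPower

/-- The odd extension `|x| ^ r * sign x` to the real line of the power function `x ^ r` on
`[0, ∞)`. -/
noncomputable def signedRPow (r x : ℝ) : ℝ := x⁺ ^ r - x⁻ ^ r

lemma odd_signedRPow (r : ℝ) : (signedRPow r).Odd := fun x => by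
  simp [signedRPow]

lemma signedRPow_of_nonneg {r x : ℝ} (hr : r ≠ 0) (hx : 0 ≤ x) : signedRPow r x = x ^ r := by
  simp [signedRPow, posPart_of_nonneg hx, negPart_of_nonneg hx, Real.zero_rpow hr]

lemma continuous_signedRPow {r : ℝ} (hr : 0 ≤ r) : Continuous (signedRPow r) := by
  unfold signedRPow
  simp only [posPart_def, negPart_def]
  fun_prop (disch := exact fun _ => Or.inr hr)

lemma signedRPow_mul {l : ℝ} (hl : 0 ≤ l) (r x : ℝ) :
    signedRPow r (l * x) = l ^ r * signedRPow r x := by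
  have hpos : (l * x)⁺ = l * x⁺ := by
    rw [posPart_def, posPart_def, mul_max_of_nonneg _ _ hl, mul_zero]
  have hneg : (l * x)⁻ = l * x⁻ := by
    rw [negPart_def, negPart_def, mul_max_of_nonneg _ _ hl, mul_zero, mul_neg]
  rw [signedRPow, hpos, hneg, Real.mul_rpow hl (posPart_nonneg x),
    Real.mul_rpow hl (negPart_nonneg x), ← mul_sub, signedRPow]

lemma signedRPow_eqOn_of_odd {v : ℝ → ℝ} {r a : ℝ} (hr : r ≠ 0) (hodd : v.Odd)
    (hv : ∀ x ∈ Icc 0 a, v x = x ^ r) : EqOn v (signedRPow r) (Icc (-a) a) := by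
  intro x hx
  rcases le_total 0 x with h | h
  · rw [hv x ⟨h, hx.2⟩, signedRPow_of_nonneg hr h]
  · have hx' : 0 ≤ -x := neg_nonneg.2 h
    rw [← neg_neg x, hodd, odd_signedRPow, hv (-x) ⟨hx', neg_le.1 hx.1⟩,
      signedRPow_of_nonneg hr hx']

lemma signedRPow_one_div_signedRPow {r : ℝ} (hr : r ≠ 0) (x : ℝ) :
    signedRPow (1 / r) (signedRPow r x) = x := by
  have hnonneg : ∀ y, 0 ≤ y → signedRPow (1 / r) (signedRPow r y) = y := fun y hy => by
    rw [signedRPow_of_nonneg hr hy,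
      signedRPow_of_nonneg (one_div_ne_zero hr) (Real.rpow_nonneg hy r), one_div,
      Real.rpow_rpow_inv hy hr]
  rcases le_total 0 x with h | h
  · exact hnonneg x h
  · have hx := hnonneg (-x) (neg_nonneg.2 h)
    rwa [odd_signedRPow, odd_signedRPow, neg_inj] at hx

end SignedPower

section FracIntegrable

/-- The weighted class `L¹_s(ℝ)` of functions that are integrable against `(1 + |y|) ^ (-1 - 2s)`:
those for which the truncated integrals defining the fractional Laplacian converge. -/
def FracIntegrable (s : ℝ) (u : ℝ → ℝ) : Prop :=
  Integrable fun y => u y / (1 + |y|) ^ (1 + 2 * s)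

namespace FracIntegrable

variable {s : ℝ} {u : ℝ → ℝ}

lemma of_bounded (hs : 0 < s) (hu : AEStronglyMeasurable u) (hb : ∃ M, ∀ x, |u x| ≤ M) :
    FracIntegrable s u := by
  obtain ⟨M, hM⟩ := hb
  have hweight : Integrable fun y : ℝ => ((1 + |y|) ^ (1 + 2 * s))⁻¹ := by
    refine (integrable_one_add_norm (E := ℝ) (μ := volume) (r := 1 + 2 * s)
      (by rw [Module.finrank_self, Nat.cast_one]; linarith)).congr (.of_forall fun y => ?_)
    exact Real.rpow_neg (add_nonneg zero_le_one (norm_nonneg y)) _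
  simpa only [div_eq_mul_inv] using! hweight.bdd_mul hu (Eventually.of_forall hM)

lemma integrableOn_comp_add_left_div (hu : FracIntegrable s u) (hs : 0 < s) {ε : ℝ} (hε : 0 < ε)
    (x : ℝ) : IntegrableOn (fun z => u (x + z) / |z| ^ (1 + 2 * s)) {z | ε < |z|} := by
  have hmeas : MeasurableSet {z : ℝ | ε < |z|} := measurableSet_lt measurable_const measurable_abs
  have hratio : ∀ z ∈ {z : ℝ | ε < |z|},
      ‖((1 + |x + z|) / |z|) ^ (1 + 2 * s)‖ ≤ ((1 + |x|) / ε + 1) ^ (1 + 2 * s) := by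
    intro z (hz : ε < |z|)
    have hz₀ : 0 < |z| := hε.trans hz
    rw [Real.norm_of_nonneg (by positivity)]
    gcongr
    calc (1 + |x + z|) / |z| ≤ (1 + (|x| + |z|)) / |z| := by gcongr; exact abs_add_le x z
      _ = (1 + |x|) / |z| + 1 := by rw [← add_assoc, add_div _ |z|, div_self hz₀.ne']
      _ ≤ (1 + |x|) / ε + 1 := by gcongr
  have hprod := (Integrable.comp_add_left hu x).integrableOn (s := {z | ε < |z|}) |>.mul_bdd
    (by fun_prop : Measurable fun z : ℝ =>
      ((1 + |x + z|) / |z|) ^ (1 + 2 * s)).aestronglyMeasurable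
    (ae_restrict_of_forall_mem hmeas hratio)
  refine IntegrableOn.congr_fun hprod (fun z _ => ?_) hmeas
  have hpos : 0 < (1 + |x + z|) ^ (1 + 2 * s) := by positivity
  rw [Real.div_rpow (by positivity) (abs_nonneg z), div_mul_div_comm,
    mul_comm (u _), mul_div_mul_left _ _ hpos.ne']

lemma integrableOn_sub_div (hu : FracIntegrable s u) (hs : 0 < s) {ε : ℝ} (hε : 0 < ε) (x : ℝ) :
    IntegrableOn (fun z => (u x - u (x + z)) / |z| ^ (1 + 2 * s)) {z | ε < |z|} := by
  have hconst : FracIntegrable s fun _ => u x :=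
    of_bounded hs aestronglyMeasurable_const ⟨|u x|, fun _ => le_rfl⟩
  simpa only [sub_div] using! (hconst.integrableOn_comp_add_left_div hs hε x).sub
    (hu.integrableOn_comp_add_left_div hs hε x)

end FracIntegrable

end FracIntegrable

section SymmetricIntegral

variable {E : Type*} [NormedAddCommGroup E] {F : ℝ → E} {ε : ℝ}

lemma setOf_lt_abs (ε : ℝ) : {z : ℝ | ε < |z|} = Iio (-ε) ∪ Ioi ε := by
  ext z
  simp only [mem_ofPred_eq, mem_union, mem_Iio, mem_Ioi, lt_abs, lt_neg, or_comm]

lemma integrableOn_comp_neg_Ioi (hF : IntegrableOn F {z | ε < |z|}) :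
    IntegrableOn (fun z => F (-z)) (Ioi ε) := by
  rw [setOf_lt_abs] at hF
  simpa only [neg_Iio, neg_neg] using hF.left_of_union.comp_neg

lemma setIntegral_lt_abs [NormedSpace ℝ E] (hε : 0 ≤ ε) (hF : IntegrableOn F {z | ε < |z|}) :
    ∫ z in {z | ε < |z|}, F z = ∫ z in Ioi ε, (F z + F (-z)) := by
  have hneg := integrableOn_comp_neg_Ioi hF
  rw [setOf_lt_abs] at hF ⊢
  have hdisj : Disjoint (Iio (-ε)) (Ioi ε) :=
    (Iio_disjoint_Ici (by linarith)).mono_right Ioi_subset_Ici_self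
  rw [setIntegral_union hdisj measurableSet_Ioi hF.left_of_union hF.right_of_union,
    integral_add hF.right_of_union hneg, integral_comp_neg_Ioi, integral_Iic_eq_integral_Iio,
    add_comm]

lemma setOf_le_abs_ae_eq (ε : ℝ) : {z : ℝ | ε ≤ |z|} =ᵐ[volume] {z | ε < |z|} := by
  have hle : {z : ℝ | ε ≤ |z|} = Iic (-ε) ∪ Ici ε := by
    ext z
    simp only [mem_ofPred_eq, mem_union, mem_Iic, mem_Ici, le_abs']
  rw [hle, setOf_lt_abs]
  exact ae_eq_set_union Iio_ae_eq_Iic.symm Ioi_ae_eq_Ici.symm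

end SymmetricIntegral

section FracLap

/-- The integrand of the fractional Laplacian of `u` at `x` after pairing `x + y` with `x - y`, for
`0 < y`. -/
noncomputable def secondDiffQuot (s : ℝ) (u : ℝ → ℝ) (x y : ℝ) : ℝ :=
  (2 * u x - u (x + y) - u (x - y)) / y ^ (1 + 2 * s)

/-- The contribution of the increments `|y| < ρ` to the (unnormalized) fractional Laplacian of `u`
at `x`. -/
noncomputable def nearPart (s ρ : ℝ) (u : ℝ → ℝ) (x : ℝ) : ℝ :=
  ∫ y in (0)..ρ, secondDiffQuot s u x y

/-- The contribution of the increments `|y| ≥ ρ` to the (unnormalized) fractional Laplacian of `u`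
at `x`, with the opposite sign: for `ρ = 1 / 2` this is the function `H` of the main theorem. -/
noncomputable def farPart (s ρ : ℝ) (u : ℝ → ℝ) (x : ℝ) : ℝ :=
  ∫ y in {y | ρ ≤ |y|}, (u (x + y) - u x) / |y| ^ (1 + 2 * s)

variable {s ρ x : ℝ} {u : ℝ → ℝ}

lemma secondDiffQuot_neg_of_odd (hu : u.Odd) (x y : ℝ) :
    secondDiffQuot s u (-x) y = -secondDiffQuot s u x y := by
  have hadd : u (-x + y) = -u (x - y) := by rw [← hu, neg_sub, neg_add_eq_sub]
  have hsub : u (-x - y) = -u (x + y) := by rw [← hu, neg_add']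
  rw [secondDiffQuot, secondDiffQuot, hadd, hsub, hu]
  ring

lemma secondDiffQuot_zero_of_odd (hu : u.Odd) : secondDiffQuot s u 0 = 0 := by
  ext y
  simp [secondDiffQuot, hu _, hu.map_zero]

lemma odd_nearPart (hu : u.Odd) : (nearPart s ρ u).Odd := fun x => by
  simp only [nearPart, secondDiffQuot_neg_of_odd hu, intervalIntegral.integral_neg]

lemma odd_farPart (hu : u.Odd) : (farPart s ρ u).Odd := fun x => by
  have hreflect := (Measure.measurePreserving_neg volume).setIntegral_preimage_emb
    (MeasurableEquiv.neg ℝ).measurableEmbedding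
    (fun y => (u (-x + y) - u (-x)) / |y| ^ (1 + 2 * s)) {y | ρ ≤ |y|}
  simp only [preimage_ofPred_eq, abs_neg, ← neg_add, hu _, ← neg_sub', neg_div,
    integral_neg] at hreflect
  simp only [farPart, ← hreflect, hu x]

lemma secondDiffQuot_eqOn {w : ℝ → ℝ} (h : EqOn u w (Icc (x - ρ) (x + ρ))) :
    EqOn (secondDiffQuot s u x) (secondDiffQuot s w x) (Icc 0 ρ) := fun y ⟨hy₀, hyρ⟩ => by
  rw [secondDiffQuot, secondDiffQuot, h (x := x) ⟨by linarith, by linarith⟩,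
    h (x := x + y) ⟨by linarith, by linarith⟩, h (x := x - y) ⟨by linarith, by linarith⟩]

lemma nearPart_congr {w : ℝ → ℝ} (h : EqOn u w (Icc (x - ρ) (x + ρ))) (hρ : 0 ≤ ρ) :
    nearPart s ρ u x = nearPart s ρ w x :=
  intervalIntegral.integral_congr (uIcc_of_le hρ ▸ secondDiffQuot_eqOn h)

lemma sub_div_add_sub_div_neg_eq_secondDiffQuot {z : ℝ} (hz : 0 ≤ z) :
    (u x - u (x + z)) / |z| ^ (1 + 2 * s) + (u x - u (x + -z)) / |-z| ^ (1 + 2 * s) =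
      secondDiffQuot s u x z := by
  rw [secondDiffQuot, abs_neg, abs_of_nonneg hz, ← add_div, ← sub_eq_add_neg]
  ring

namespace FracIntegrable

lemma integrableOn_secondDiffQuot (hu : FracIntegrable s u) (hs : 0 < s) (hρ : 0 < ρ) (x : ℝ) :
    IntegrableOn (secondDiffQuot s u x) (Ioi ρ) := by
  have hint := hu.integrableOn_sub_div hs hρ x
  refine IntegrableOn.congr_fun ((hint.mono_set ?_).add (integrableOn_comp_neg_Ioi hint))
    (fun z hz => sub_div_add_sub_div_neg_eq_secondDiffQuot (hρ.trans hz).le) measurableSet_Ioi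
  exact setOf_lt_abs ρ ▸ subset_union_right

lemma setIntegral_lt_abs_sub_div (hu : FracIntegrable s u) (hs : 0 < s) (hρ : 0 < ρ) (x : ℝ) :
    ∫ z in {z | ρ < |z|}, (u x - u (x + z)) / |z| ^ (1 + 2 * s) =
      ∫ z in Ioi ρ, secondDiffQuot s u x z := by
  rw [setIntegral_lt_abs hρ.le (hu.integrableOn_sub_div hs hρ x)]
  exact setIntegral_congr_fun measurableSet_Ioi fun z hz =>
    sub_div_add_sub_div_neg_eq_secondDiffQuot (hρ.trans hz).le

lemma farPart_eq (hu : FracIntegrable s u) (hs : 0 < s) (hρ : 0 < ρ) (x : ℝ) :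
    farPart s ρ u x = -∫ z in Ioi ρ, secondDiffQuot s u x z := by
  rw [← hu.setIntegral_lt_abs_sub_div hs hρ, farPart, setIntegral_congr_set (setOf_le_abs_ae_eq ρ),
    ← integral_neg]
  simp only [← neg_div, neg_sub]

end FracIntegrable

lemma hasFracLapAt_of_tendsto {L : ℝ}
    (hint : ∀ ε, 0 < ε →
      IntegrableOn (fun z => (u x - u (x + z)) / |z| ^ (1 + 2 * s)) {z | ε < |z|})
    (hlim : Tendsto (fun ε => ∫ z in {z | ε < |z|}, (u x - u (x + z)) / |z| ^ (1 + 2 * s))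
      (nhdsWithin 0 (Ioi 0)) (nhds L)) :
    HasFracLapAt s u x (fracLapCoef s * L) := by
  have hshift := measurePreserving_add_left (volume : Measure ℝ) x
  have hemb := measurableEmbedding_addLeft x
  refine ⟨fun ε hε => ?_, (hlim.congr fun ε => ?_).const_mul _⟩
  · rw [← hshift.integrableOn_comp_preimage hemb]
    simpa [Function.comp_def] using! hint ε hε
  · simpa using hshift.setIntegral_preimage_emb hemb
      (fun y => (u x - u y) / |x - y| ^ (1 + 2 * s)) {y | ε < |y - x|}

lemma FracIntegrable.hasFracLapAt (hu : FracIntegrable s u) (hs : 0 < s) (hρ : 0 < ρ)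
    (hx : IntegrableOn (secondDiffQuot s u x) (Ioc 0 ρ)) :
    HasFracLapAt s u x (fracLapCoef s * (nearPart s ρ u x - farPart s ρ u x)) := by
  refine hasFracLapAt_of_tendsto (fun ε hε => hu.integrableOn_sub_div hs hε x) ?_
  have hsplit : ∀ ε ∈ Ioi (0 : ℝ),
      (∫ y in ε..ρ, secondDiffQuot s u x y) - farPart s ρ u x =
        ∫ z in {z | ε < |z|}, (u x - u (x + z)) / |z| ^ (1 + 2 * s) := fun ε hε => by
    rw [hu.setIntegral_lt_abs_sub_div hs hε, hu.farPart_eq hs hρ, sub_neg_eq_add,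
      intervalIntegral.integral_interval_add_Ioi (hu.integrableOn_secondDiffQuot hs hε x)
        (hu.integrableOn_secondDiffQuot hs hρ x)]
  have hcont : ContinuousOn (fun ε => ∫ y in ε..ρ, secondDiffQuot s u x y) (Icc 0 ρ) := by
    rw [← uIcc_of_le hρ.le]
    refine intervalIntegral.continuousOn_primitive_interval_left ?_
    rwa [uIcc_of_le hρ.le, integrableOn_Icc_iff_integrableOn_Ioc]
  have hright : nhdsWithin 0 (Ioi 0) ≤ nhdsWithin 0 (Icc 0 ρ) := by
    rw [← nhdsWithin_Ioo_eq_nhdsGT hρ]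
    exact nhdsWithin_mono 0 Ioo_subset_Icc_self
  have hnear := (hcont 0 ⟨le_rfl, hρ.le⟩).tendsto.mono_left hright
  exact (hnear.sub_const _).congr' (eventually_mem_nhdsWithin.mono hsplit)

end FracLap

section RPowTail

lemma lipschitzOnWith_integral {X Y E : Type*} [PseudoMetricSpace X] [MeasurableSpace Y]
    {μ : Measure Y} [NormedAddCommGroup E] [NormedSpace ℝ E] {S : Set X} {F : X → Y → E}
    {bound : Y → ℝ} (hF : ∀ x ∈ S, Integrable (F x) μ) (hbound : Integrable bound μ)
    (hlip : ∀ x ∈ S, ∀ x' ∈ S, ∀ᵐ y ∂μ, ‖F x y - F x' y‖ ≤ bound y * dist x x') :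
    LipschitzOnWith (∫ y, bound y ∂μ).toNNReal (fun x => ∫ y, F x y ∂μ) S := by
  refine LipschitzOnWith.of_dist_le_mul fun x hx x' hx' => ?_
  rw [dist_eq_norm, ← integral_sub (hF x hx) (hF x' hx')]
  calc ‖∫ y, (F x y - F x' y) ∂μ‖ ≤ ∫ y, bound y * dist x x' ∂μ :=
        norm_integral_le_of_norm_le (hbound.mul_const _) (hlip x hx x' hx')
    _ = (∫ y, bound y ∂μ) * dist x x' := integral_mul_const _ _
    _ ≤ (∫ y, bound y ∂μ).toNNReal * dist x x' := by
        gcongr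
        exact Real.le_coe_toNNReal _

/-- The tail `∫_ρ^∞ ((y + x) ^ r - (y - x) ^ r) y ^ (-q) dy`. For `q = 1 + 2 * s` it is the part of
the second difference integral of `signedRPow r` over `y > ρ` that is Lipschitz in `x`. -/
noncomputable def rpowTail (r q ρ x : ℝ) : ℝ :=
  ∫ y in Ioi ρ, ((y + x) ^ r - (y - x) ^ r) / y ^ q

variable {r q ρ x : ℝ}

lemma abs_sub_rpowTail_integrand_le {x' y : ℝ} (hx : x ∈ Icc (-ρ) ρ) (hx' : x' ∈ Icc (-ρ) ρ)
    (hy : y ∈ Ioi ρ) :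
    |((y + x) ^ r - (y - x) ^ r) / y ^ q - ((y + x') ^ r - (y - x') ^ r) / y ^ q| ≤
      2 * |r| * ((y + -ρ) ^ (r - 1) / y ^ q + (y + ρ) ^ (r - 1) / y ^ q) * |x - x'| := by
  rw [mem_Ioi] at hy
  have hρ : 0 ≤ ρ := by linarith [hx.1.trans hx.2]
  have hpos : 0 < y ^ q := Real.rpow_pos_of_pos (hρ.trans_lt hy) q
  have hadd := abs_rpow_sub_rpow_le (p := r) (by linarith : 0 < y + -ρ)
    (M := y + ρ) (a := y + x) (b := y + x') ⟨by linarith [hx.1], by linarith [hx.2]⟩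
    ⟨by linarith [hx'.1], by linarith [hx'.2]⟩
  have hsub := abs_rpow_sub_rpow_le (p := r) (by linarith : 0 < y + -ρ)
    (M := y + ρ) (a := y - x') (b := y - x) ⟨by linarith [hx'.2], by linarith [hx'.1]⟩
    ⟨by linarith [hx.2], by linarith [hx.1]⟩
  rw [add_sub_add_left_eq_sub] at hadd
  rw [sub_sub_sub_cancel_left] at hsub
  rw [← sub_div, ← add_div, abs_div, abs_of_pos hpos, mul_div_assoc', div_mul_eq_mul_div]
  gcongr
  calc |(y + x) ^ r - (y - x) ^ r - ((y + x') ^ r - (y - x') ^ r)|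
      = |((y + x) ^ r - (y + x') ^ r) + ((y - x') ^ r - (y - x) ^ r)| := by ring_nf
    _ ≤ _ := abs_add_le _ _
    _ ≤ _ := add_le_add hadd hsub
    _ = _ := by ring

lemma integrableOn_rpowTail_bound (hr : 0 < r) (hrq : r < q) (hρ : 0 < ρ) :
    IntegrableOn (fun y => 2 * |r| * ((y + -ρ) ^ (r - 1) / y ^ q + (y + ρ) ^ (r - 1) / y ^ q))
      (Ioi ρ) := by
  have h : ∀ c : ℝ, |c| ≤ ρ → IntegrableOn (fun y => (y + c) ^ (r - 1) / y ^ q) (Ioi ρ) :=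
    fun c => integrableOn_add_rpow_div_rpow_Ioi (by linarith) (by linarith) hρ
  exact ((h (-ρ) (by rw [abs_neg, abs_of_pos hρ])).add (h ρ (abs_of_pos hρ).le)).const_mul _

lemma integrableOn_rpowTail_integrand (hr : 0 < r) (hrq : r < q) (hρ : 0 < ρ)
    (hx : x ∈ Icc (-ρ) ρ) :
    IntegrableOn (fun y => ((y + x) ^ r - (y - x) ^ r) / y ^ q) (Ioi ρ) := by
  refine Integrable.mono' ((integrableOn_rpowTail_bound hr hrq hρ).mul_const |x|)
    (by fun_prop : Measurable fun y : ℝ => _).aestronglyMeasurable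
    (ae_restrict_of_forall_mem measurableSet_Ioi fun y hy => ?_)
  have hzero : (0 : ℝ) ∈ Icc (-ρ) ρ := ⟨neg_nonpos.2 hρ.le, hρ.le⟩
  simpa only [add_zero, sub_zero, sub_self, zero_div, Real.norm_eq_abs] using
    abs_sub_rpowTail_integrand_le (r := r) (q := q) hx hzero hy

lemma exists_lipschitzOnWith_rpowTail (hr : 0 < r) (hrq : r < q) (hρ : 0 < ρ) :
    ∃ K, LipschitzOnWith K (rpowTail r q ρ) (Icc (-ρ) ρ) :=
  ⟨_, lipschitzOnWith_integral (fun _ hx => integrableOn_rpowTail_integrand hr hrq hρ hx)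
    (integrableOn_rpowTail_bound hr hrq hρ) fun _ hx _ hx' =>
      ae_restrict_of_forall_mem measurableSet_Ioi fun _ hy =>
        abs_sub_rpowTail_integrand_le hx hx' hy⟩

end RPowTail

section SecondDiff

lemma abs_secondDiff_le {g g' : ℝ → ℝ} {x h : ℝ} {K : NNReal} (hh : 0 ≤ h)
    (hg : ∀ z ∈ Icc (x - h) (x + h), HasDerivAt g (g' z) z)
    (hg' : LipschitzOnWith K g' (Icc (x - h) (x + h))) :
    |2 * g x - g (x + h) - g (x - h)| ≤ 2 * K * h ^ 2 := by
  have hadd : ∀ w ∈ Icc 0 h, x + w ∈ Icc (x - h) (x + h) := fun w hw =>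
    ⟨by linarith [hw.1], by linarith [hw.2]⟩
  have hsub : ∀ w ∈ Icc 0 h, x - w ∈ Icc (x - h) (x + h) := fun w hw =>
    ⟨by linarith [hw.2], by linarith [hw.1]⟩
  have hderiv : ∀ w ∈ Icc 0 h, HasDerivWithinAt (fun w => g (x + w) + g (x - w))
      (g' (x + w) - g' (x - w)) (Icc 0 h) w := fun w hw => by
    simpa only [sub_eq_add_neg] using! (((hg _ (hadd w hw)).comp_const_add x w).add
      ((hg _ (hsub w hw)).comp_const_sub x w)).hasDerivWithinAt
  have hbound : ∀ w ∈ Icc 0 h, ‖g' (x + w) - g' (x - w)‖ ≤ 2 * K * h := fun w hw => by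
    have hdist := hg'.dist_le_mul _ (hadd w hw) _ (hsub w hw)
    have hw₂ : x + w - (x - w) = 2 * w := by ring
    rw [dist_eq_norm, Real.dist_eq, hw₂, abs_of_nonneg (by linarith [hw.1])] at hdist
    calc ‖g' (x + w) - g' (x - w)‖ ≤ K * (2 * w) := hdist
      _ ≤ K * (2 * h) := by gcongr; exact hw.2
      _ = 2 * K * h := by ring
  have hmvt := (convex_Icc 0 h).norm_image_sub_le_of_norm_hasDerivWithin_le hderiv hbound
    ⟨le_rfl, hh⟩ ⟨hh, le_rfl⟩
  rw [add_zero, sub_zero, sub_zero, Real.norm_eq_abs, Real.norm_of_nonneg hh] at hmvt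
  calc |2 * g x - g (x + h) - g (x - h)| = |g (x + h) + g (x - h) - (g x + g x)| := by
        rw [← abs_neg]; ring_nf
    _ ≤ 2 * K * h * h := hmvt
    _ = 2 * K * h ^ 2 := by ring

lemma integrableOn_secondDiffQuot_Ioc {s C δ x : ℝ} {u : ℝ → ℝ} (hs : s < 1) (hδ : 0 < δ)
    (hu : Continuous u) (hC : ∀ y ∈ Ioc 0 δ, |2 * u x - u (x + y) - u (x - y)| ≤ C * y ^ 2)
    (ρ : ℝ) : IntegrableOn (secondDiffQuot s u x) (Ioc 0 ρ) := by
  have hnear : IntegrableOn (secondDiffQuot s u x) (Ioc 0 δ) := by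
    have hdom : IntegrableOn (fun y : ℝ => C * y ^ (1 - 2 * s)) (Ioc 0 δ) :=
      ((intervalIntegrable_iff_integrableOn_Ioc_of_le hδ.le).1
        (intervalIntegral.intervalIntegrable_rpow' (by linarith))).const_mul C
    have hmeas : Measurable (secondDiffQuot s u x) := by
      have := hu.measurable
      unfold secondDiffQuot
      fun_prop
    refine Integrable.mono' hdom hmeas.aestronglyMeasurable
      (ae_restrict_of_forall_mem measurableSet_Ioc fun y hy => ?_)
    have hpos : 0 < y ^ (1 + 2 * s) := Real.rpow_pos_of_pos hy.1 _
    have hexp : y ^ (1 - 2 * s) * y ^ (1 + 2 * s) = y ^ 2 := by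
      rw [← Real.rpow_add hy.1, ← Real.rpow_natCast]
      ring_nf
    rw [secondDiffQuot, Real.norm_eq_abs, abs_div, abs_of_pos hpos, div_le_iff₀ hpos, mul_assoc,
      hexp]
    exact hC y hy
  have hfar : IntegrableOn (secondDiffQuot s u x) (Icc δ ρ) := by
    refine ContinuousOn.integrableOn_Icc (ContinuousOn.div (by fun_prop) ?_ fun y hy => ?_)
    · exact continuousOn_id.rpow_const fun y hy => Or.inl (hδ.trans_le hy.1).ne'
    · exact (Real.rpow_pos_of_pos (hδ.trans_le hy.1) _).ne'
  refine (hnear.union hfar).mono_set fun y hy => ?_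
  exact (le_total y δ).imp (fun h => ⟨hy.1, h⟩) fun h => ⟨h, hy.2⟩

end SecondDiff

section SignedPowerSecondDiff

variable {r s ρ x : ℝ}

lemma secondDiffQuot_signedRPow_mul {l y : ℝ} (hl : 0 < l) (hy : 0 ≤ y) (x : ℝ) :
    secondDiffQuot s (signedRPow r) (l * x) (l * y) =
      l ^ (r - (1 + 2 * s)) * secondDiffQuot s (signedRPow r) x y := by
  rw [secondDiffQuot, secondDiffQuot, ← mul_add, ← mul_sub, signedRPow_mul hl.le,
    signedRPow_mul hl.le, signedRPow_mul hl.le, Real.mul_rpow hl.le hy, Real.rpow_sub hl,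
    div_mul_div_comm]
  ring

lemma secondDiffQuot_signedRPow_of_le {y : ℝ} (hr : r ≠ 0) (hx : 0 ≤ x) (hxy : x ≤ y) :
    secondDiffQuot s (signedRPow r) x y = 2 * x ^ r * (1 / y ^ (1 + 2 * s)) -
      ((y + x) ^ r - (y - x) ^ r) / y ^ (1 + 2 * s) := by
  rw [secondDiffQuot, ← neg_sub y x, odd_signedRPow, signedRPow_of_nonneg hr hx,
    signedRPow_of_nonneg hr (by linarith), signedRPow_of_nonneg hr (by linarith), add_comm x y]
  ring

lemma integrableOn_secondDiffQuot_signedRPow_Ioi (hs : 0 < s) (hr : 0 < r)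
    (hrs : r < 1 + 2 * s) (hρ : 0 < ρ) (hx : x ∈ Icc 0 ρ) :
    IntegrableOn (secondDiffQuot s (signedRPow r) x) (Ioi ρ) :=
  IntegrableOn.congr_fun
    (((integrableOn_one_div_rpow_Ioi (by linarith) hρ).const_mul (2 * x ^ r)).sub
      (integrableOn_rpowTail_integrand hr hrs hρ ⟨by linarith [hx.1], hx.2⟩))
    (fun _ hy => (secondDiffQuot_signedRPow_of_le hr.ne' hx.1 (hx.2.trans hy.le)).symm)
    measurableSet_Ioi

lemma setIntegral_secondDiffQuot_signedRPow_Ioi (hs : 0 < s) (hr : 0 < r)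
    (hrs : r < 1 + 2 * s) (hρ : 0 < ρ) (hx : x ∈ Icc 0 ρ) :
    ∫ y in Ioi ρ, secondDiffQuot s (signedRPow r) x y =
      2 * x ^ r * (∫ y in Ioi ρ, 1 / y ^ (1 + 2 * s)) - rpowTail r (1 + 2 * s) ρ x := by
  rw [rpowTail, ← integral_const_mul, ← integral_sub
    ((integrableOn_one_div_rpow_Ioi (by linarith) hρ).const_mul _)
    (integrableOn_rpowTail_integrand hr hrs hρ ⟨by linarith [hx.1], hx.2⟩)]
  exact setIntegral_congr_fun measurableSet_Ioi fun _ hy =>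
    secondDiffQuot_signedRPow_of_le hr.ne' hx.1 (hx.2.trans hy.le)

lemma exists_abs_secondDiff_signedRPow_one_le (hr : r ≠ 0) :
    ∃ C, ∀ y ∈ Ioc (0 : ℝ) (1 / 2),
      |2 * signedRPow r 1 - signedRPow r (1 + y) - signedRPow r (1 - y)| ≤ C * y ^ 2 := by
  have hsmooth : ContDiffOn ℝ 1 (fun z : ℝ => r * z ^ (r - 1)) (Icc (1 / 2) (3 / 2)) :=
    contDiffOn_const.mul fun z hz => (Real.contDiffAt_rpow_const_of_ne
      (one_half_pos.trans_le hz.1).ne').contDiffWithinAt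
  obtain ⟨K, hK⟩ := hsmooth.exists_lipschitzOnWith one_ne_zero (convex_Icc _ _) isCompact_Icc
  refine ⟨2 * K, fun y ⟨hy₀, hy⟩ => ?_⟩
  rw [signedRPow_of_nonneg hr zero_le_one, signedRPow_of_nonneg hr (by linarith),
    signedRPow_of_nonneg hr (by linarith)]
  exact abs_secondDiff_le hy₀.le
    (fun z hz => Real.hasDerivAt_rpow_const (Or.inl (by linarith [hz.1] : 0 < z).ne'))
    (hK.mono (Icc_subset_Icc (by linarith) (by linarith)))

lemma integrableOn_secondDiffQuot_signedRPow_one (hs₀ : 0 < s) (hs₁ : s < 1) (hr : 0 < r)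
    (hrs : r < 1 + 2 * s) : IntegrableOn (secondDiffQuot s (signedRPow r) 1) (Ioi 0) := by
  obtain ⟨C, hC⟩ := exists_abs_secondDiff_signedRPow_one_le hr.ne'
  rw [← Ioc_union_Ioi_eq_Ioi zero_le_one]
  exact (integrableOn_secondDiffQuot_Ioc hs₁ one_half_pos (continuous_signedRPow hr.le) hC 1).union
    (integrableOn_secondDiffQuot_signedRPow_Ioi hs₀ hr hrs one_pos ⟨zero_le_one, le_rfl⟩)

lemma integrableOn_secondDiffQuot_signedRPow (hs₀ : 0 < s) (hs₁ : s < 1) (hr : 0 < r)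
    (hrs : r < 1 + 2 * s) (x : ℝ) : IntegrableOn (secondDiffQuot s (signedRPow r) x) (Ioi 0) := by
  have hpos : ∀ l, 0 < l → IntegrableOn (secondDiffQuot s (signedRPow r) l) (Ioi 0) := by
    intro l hl
    have hscaled := IntegrableOn.congr_fun
      ((integrableOn_secondDiffQuot_signedRPow_one hs₀ hs₁ hr hrs).const_mul _)
      (fun y hy => (secondDiffQuot_signedRPow_mul hl (mem_Ioi.1 hy).le 1).symm) measurableSet_Ioi
    rwa [mul_one, integrableOn_Ioi_comp_mul_left_iff _ _ hl, mul_zero] at hscaled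
  rcases lt_trichotomy x 0 with hx | rfl | hx
  · have hneg := (hpos (-x) (neg_pos.2 hx)).neg
    rwa [funext (secondDiffQuot_neg_of_odd (odd_signedRPow r) x), ← Pi.neg_def, neg_neg] at hneg
  · exact secondDiffQuot_zero_of_odd (odd_signedRPow r) ▸ integrableOn_zero
  · exact hpos x hx

lemma setIntegral_secondDiffQuot_signedRPow (hrs : 2 * s < r) (hx : 0 ≤ x) :
    ∫ y in Ioi 0, secondDiffQuot s (signedRPow r) x y =
      x ^ (r - 2 * s) * ∫ y in Ioi 0, secondDiffQuot s (signedRPow r) 1 y := by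
  rcases hx.eq_or_lt with rfl | hx
  · rw [secondDiffQuot_zero_of_odd (odd_signedRPow r), Real.zero_rpow (sub_pos.2 hrs).ne', zero_mul]
    exact integral_zero _ _
  · have hexp : r - 2 * s = 1 + (r - (1 + 2 * s)) := by ring
    calc ∫ y in Ioi 0, secondDiffQuot s (signedRPow r) x y
        = x * ∫ y in Ioi 0, secondDiffQuot s (signedRPow r) (x * 1) (x * y) := by
          rw [integral_comp_mul_left_Ioi _ _ hx, mul_one, mul_zero, smul_eq_mul,
            mul_inv_cancel_left₀ hx.ne']
      _ = x * ∫ y in Ioi 0, x ^ (r - (1 + 2 * s)) * secondDiffQuot s (signedRPow r) 1 y := by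
          rw [setIntegral_congr_fun measurableSet_Ioi fun y hy =>
            secondDiffQuot_signedRPow_mul hx (mem_Ioi.1 hy).le 1]
      _ = x ^ (r - 2 * s) * ∫ y in Ioi 0, secondDiffQuot s (signedRPow r) 1 y := by
          rw [integral_const_mul, ← mul_assoc, hexp, Real.rpow_add hx, Real.rpow_one]

lemma nearPart_signedRPow_eq (hs₀ : 0 < s) (hs₁ : s < 1) (hr : 2 * s < r) (hrs : r < 1 + 2 * s)
    (hx : x ∈ Icc 0 ρ) (hρ : 0 < ρ) :
    nearPart s ρ (signedRPow r) x =
      x ^ (r - 2 * s) * (∫ y in Ioi 0, secondDiffQuot s (signedRPow r) 1 y) -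
        2 * x ^ r * (∫ y in Ioi ρ, 1 / y ^ (1 + 2 * s)) + rpowTail r (1 + 2 * s) ρ x := by
  have hr₀ : 0 < r := by linarith
  have hint := integrableOn_secondDiffQuot_signedRPow hs₀ hs₁ hr₀ hrs x
  have hsplit := intervalIntegral.integral_interval_add_Ioi hint
    (hint.mono_set (Ioi_subset_Ioi hρ.le))
  rw [setIntegral_secondDiffQuot_signedRPow hr hx.1,
    setIntegral_secondDiffQuot_signedRPow_Ioi hs₀ hr₀ hrs hρ hx] at hsplit
  rw [nearPart, ← hsplit]
  ring

end SignedPowerSecondDiff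

section HolderNearPart

variable {r s ρ : ℝ}

lemma rpow_one_div_mem_Icc {t : ℝ} (hr : 0 < r) (hρ : 0 ≤ ρ) (ht : t ∈ Icc 0 (ρ ^ r)) :
    t ^ (1 / r) ∈ Icc 0 ρ := by
  refine ⟨Real.rpow_nonneg ht.1 _, ?_⟩
  have hle := Real.rpow_le_rpow ht.1 ht.2 (one_div_pos.2 hr).le
  rwa [one_div, Real.rpow_rpow_inv hρ hr.ne', ← one_div] at hle

lemma holderContinuousOn_nearPart_signedRPow (hs₀ : 0 < s) (hs₁ : s < 1) (hr : 2 * s < r)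
    (hrs : r < 1 + 2 * s) (hρ : 0 < ρ) :
    HolderContinuousOn ((r - 2 * s) / r).toNNReal
      (fun t => nearPart s ρ (signedRPow r) (t ^ (1 / r))) (Icc 0 (ρ ^ r)) := by
  have hr₀ : 0 < r := by linarith
  set β := ((r - 2 * s) / r).toNNReal
  have hβ : (β : ℝ) = (r - 2 * s) / r := Real.coe_toNNReal _ (div_pos (by linarith) hr₀).le
  have hβ₁ : β ≤ 1 := Real.toNNReal_le_one.2 ((div_le_one hr₀).2 (by linarith))
  have hβr : (β : ℝ) ≤ 1 / r := by rw [hβ]; gcongr; linarith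
  obtain ⟨K, hK⟩ := exists_lipschitzOnWith_rpowTail hr₀ hrs hρ
  have htail : HolderContinuousOn β (rpowTail r (1 + 2 * s) ρ ∘ fun t => t ^ (1 / r))
      (Icc 0 (ρ ^ r)) :=
    .lipschitzOnWith_comp hK (holderContinuousOn_rpow hβ₁ hβr) fun t ht =>
      Icc_subset_Icc_left (neg_nonpos.2 hρ.le) (rpow_one_div_mem_Icc hr₀ hρ.le ht)
  refine ((((holderContinuousOn_rpow hβ₁ hβ.le).const_smul
    (∫ y in Ioi 0, secondDiffQuot s (signedRPow r) 1 y)).sub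
    ((holderContinuousOn_rpow hβ₁ (p := 1) hβ₁).const_smul
      (2 * ∫ y in Ioi ρ, 1 / y ^ (1 + 2 * s)))).add htail).congr fun t ht => ?_
  have hpow : (t ^ (1 / r)) ^ (r - 2 * s) = t ^ ((r - 2 * s) / r) := by
    rw [← Real.rpow_mul ht.1, one_div_mul_eq_div]
  have hpow_r : (t ^ (1 / r)) ^ r = t := by rw [one_div, Real.rpow_inv_rpow ht.1 hr₀.ne']
  simp only [nearPart_signedRPow_eq hs₀ hs₁ hr hrs (rpow_one_div_mem_Icc hr₀ hρ.le ht) hρ, hpow,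
    hpow_r, Pi.add_apply, Pi.sub_apply, Pi.smul_apply, smul_eq_mul, Real.rpow_one,
    Function.comp_apply]
  ring

end HolderNearPart

section LocallySignedPower

variable {r s ρ x : ℝ} {v : ℝ → ℝ}

lemma FracIntegrable.hasFracLapAt_of_eqOn_signedRPow (hint : FracIntegrable s v) (hs₀ : 0 < s)
    (hs₁ : s < 1) (hr : 0 < r) (hrs : r < 1 + 2 * s) (hρ : 0 < ρ)
    (hv : EqOn v (signedRPow r) (Icc (x - ρ) (x + ρ))) :
    HasFracLapAt s v x (fracLapCoef s * (nearPart s ρ (signedRPow r) x - farPart s ρ v x)) := by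
  rw [← nearPart_congr hv hρ.le]
  exact hint.hasFracLapAt hs₀ hρ (IntegrableOn.congr_fun
    ((integrableOn_secondDiffQuot_signedRPow hs₀ hs₁ hr hrs x).mono_set Ioc_subset_Ioi_self)
    (fun y hy => (secondDiffQuot_eqOn hv (Ioc_subset_Icc_self hy)).symm) measurableSet_Ioc)

lemma odd_nearPart_sub_farPart (hv : v.Odd) (c : ℝ) :
    (fun x => c * (nearPart s ρ (signedRPow r) x - farPart s ρ v x)).Odd := fun x => by
  simp only [odd_nearPart (odd_signedRPow r) x, odd_farPart hv x]
  ring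

lemma memCalpha_nearPart_sub_farPart_comp_signedRPow (hs₀ : 0 < s) (hs₁ : s < 1) (hr : 2 * s < r)
    (hrs : r < 1 + 2 * s) (hρ : 0 < ρ) (hv : v.Odd)
    (hfar : HolderContinuousOn ((r - 2 * s) / r).toNNReal (fun t => farPart s ρ v (t ^ (1 / r)))
      (Icc 0 (ρ ^ r))) (c : ℝ) :
    MemCalpha ((r - 2 * s) / r) (Icc (-ρ ^ r) (ρ ^ r))
      ((fun x => c * (nearPart s ρ (signedRPow r) x - farPart s ρ v x)) ∘
        signedRPow (1 / r)) := by
  have hr₀ : 0 < r := by linarith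
  have hβ₀ : 0 < (r - 2 * s) / r := div_pos (sub_pos.2 hr) hr₀
  have hβ₁ : (r - 2 * s) / r < 1 := (div_lt_one hr₀).2 (by linarith)
  have hpos := (((holderContinuousOn_nearPart_signedRPow hs₀ hs₁ hr hrs hρ).sub hfar).const_smul
    c).congr (g := (fun x => c * (nearPart s ρ (signedRPow r) x - farPart s ρ v x)) ∘
      signedRPow (1 / r)) fun t ht => by
    simp only [Function.comp_apply, signedRPow_of_nonneg (one_div_pos.2 hr₀).ne' ht.1,
      Pi.smul_apply, Pi.sub_apply, smul_eq_mul]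
  have hHolder := hpos.Icc_neg_of_odd (Real.rpow_nonneg hρ.le r)
    ((odd_nearPart_sub_farPart hv c).comp_odd (odd_signedRPow (1 / r)))
  simpa only [Real.coe_toNNReal _ hβ₀.le] using hHolder.memCalpha (Real.toNNReal_pos.2 hβ₀)
    (Real.toNNReal_lt_one.2 hβ₁) isCompact_Icc

end LocallySignedPower

theorem stmt8_general (s r : ℝ) (hs0 : 0 < s) (hs1 : s < 1) (hr1 : 2 * s < r)
    (hr2 : r < 1 + 2 * s) (v : ℝ → ℝ) (hint : FracIntegrable s v) (hodd : ∀ x : ℝ, v (-x) = -v x)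
    (hv : ∀ x : ℝ, 0 ≤ x → x ≤ 1 → v x = x ^ r) (H : ℝ → ℝ)
    (hH : ∀ x : ℝ,
      H x = ∫ y in {y : ℝ | 1 / 2 ≤ |y|}, (v (x + y) - v x) / |y| ^ (1 + 2 * s))
    (hHolder : HolderContinuousOn ((r - 2 * s) / r).toNNReal (fun t : ℝ => H (t ^ (1 / r)))
      (Icc 0 ((2 : ℝ) ^ (-r)))) :
    ∃ f : ℝ → ℝ,
      MemCalpha ((r - 2 * s) / r) (Icc (-((2 : ℝ) ^ (-r))) ((2 : ℝ) ^ (-r))) f ∧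
      ∀ x ∈ Icc (-(1 / 2) : ℝ) (1 / 2), HasFracLapAt s v x (f (v x)) := by
  obtain rfl : H = farPart s (1 / 2) v := funext hH
  have hr : 0 < r := by linarith
  have hv_eq : EqOn v (signedRPow r) (Icc (-1) 1) :=
    signedRPow_eqOn_of_odd hr.ne' hodd fun x hx => hv x hx.1 hx.2
  have hradius : (2 : ℝ) ^ (-r) = (1 / 2) ^ r := by
    rw [Real.rpow_neg zero_le_two, one_div, Real.inv_rpow zero_le_two]
  rw [hradius] at hHolder ⊢
  refine ⟨_, memCalpha_nearPart_sub_farPart_comp_signedRPow hs0 hs1 hr1 hr2 one_half_pos hodd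
    hHolder (fracLapCoef s), fun x hx => ?_⟩
  rw [hv_eq ⟨by linarith [hx.1], by linarith [hx.2]⟩, Function.comp_apply,
    signedRPow_one_div_signedRPow hr.ne']
  exact hint.hasFracLapAt_of_eqOn_signedRPow hs0 hs1 hr hr2 one_half_pos
    (hv_eq.mono (Icc_subset_Icc (by linarith [hx.1]) (by linarith [hx.2])))

theorem stmt8 (s r : ℝ) (hs0 : 0 < s) (hs1 : s < 1) (hr1 : 2 * s < r) (hr2 : r < 1 + 2 * s)
    (v : ℝ → ℝ) (hm : Measurable v) (hb : ∃ M : ℝ, ∀ x : ℝ, |v x| ≤ M)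
    (hodd : ∀ x : ℝ, v (-x) = -v x)
    (hv : ∀ x : ℝ, 0 ≤ x → x ≤ 1 → v x = x ^ r)
    (H : ℝ → ℝ)
    (hH : ∀ x : ℝ,
      H x = ∫ y in {y : ℝ | 1 / 2 ≤ |y|}, (v (x + y) - v x) / |y| ^ (1 + 2 * s))
    (hLip : ∃ K : NNReal, LipschitzOnWith K (fun t : ℝ => H (t ^ (1 / r)))
      (Set.Icc 0 ((2 : ℝ) ^ (-r)))) :
    ∃ f : ℝ → ℝ,
      MemCalpha ((r - 2 * s) / r) (Set.Icc (-((2 : ℝ) ^ (-r))) ((2 : ℝ) ^ (-r))) f ∧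
      ∀ x ∈ Set.Icc (-(1 / 2) : ℝ) (1 / 2), HasFracLapAt s v x (f (v x)) := by
  obtain ⟨K, hK⟩ := hLip
  have hβ : (r - 2 * s) / r ≤ 1 := div_le_one_of_le₀ (by linarith) (by linarith)
  exact stmt8_general s r hs0 hs1 hr1 hr2 v (.of_bounded hs0 hm.aestronglyMeasurable hb) hodd hv H
    hH (.of_lipschitzOnWith hK (Metric.isBounded_Icc _ _) (Real.toNNReal_le_one.2 hβ))
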